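/- Let s, t ∈ 𝕆 with ‖s‖ = ‖t‖ = 1, s·(s·s) = 1, t·(t·t) = 1, and s ≠ 1. If s·t = t·s, then t ∈ {1, s, s̄}. (Equivalently: a cube root of unity in 𝕆 commuting with a nontrivial cube root of unity s must lie in {1, s, s²}.) -/

import Mathlib

noncomputable section

/-- The octonions as the Cayley–Dickson double of the quaternions. -/
abbrev Oct : Type := Quaternion ℝ × Quaternion ℝ

namespace Oct

/-- Cayley–Dickson multiplication: (a,b)·(c,d) = (ac − d̄b, da + bc̄). -/
def mul (x y : Oct) : Oct :=
  (x.1 * y.1 - star y.2 * x.2, y.2 * x.1 + x.2 * star y.1)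

/-- The unit 1 = (1,0). -/
def one : Oct := (1, 0)

/-- Octonionic conjugation κ(a,b) = (ā, −b). -/
def conj (x : Oct) : Oct := (star x.1, -x.2)

/-- The squared Euclidean norm ‖(a,b)‖² = ‖a‖² + ‖b‖². -/
def normSq (x : Oct) : ℝ := ‖x.1‖ ^ 2 + ‖x.2‖ ^ 2

/-- Left multiplication L(s) : y ↦ s·y. -/
def L (s : Oct) : Oct → Oct := fun y => mul s y

/-- A linear automorphism of 𝕆 is an isometry if it preserves the Euclidean norm. -/
def IsIsometry (A : Oct ≃ₗ[ℝ] Oct) : Prop := ∀ x, normSq (A x) = normSq x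

/-- A triality triple: ℝ-linear isometric bijections with B(x·y) = (Cx)·(Ay). -/
def IsTriality (A B C : Oct ≃ₗ[ℝ] Oct) : Prop :=
  IsIsometry A ∧ IsIsometry B ∧ IsIsometry C ∧
    ∀ x y : Oct, B (mul x y) = mul (C x) (A y)

/-- Octonionic conjugation κ as an ℝ-linear equivalence. -/
def kappa : Oct ≃ₗ[ℝ] Oct where
  toFun := conj
  invFun := conj
  left_inv := fun x => by simp [conj]
  right_inv := fun x => by simp [conj]
  map_add' := fun x y => by simp [conj, Prod.ext_iff, star_add, neg_add, add_comm]
  map_smul' := fun r x => by simp [conj, Prod.ext_iff]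

/-- D ↦ κ∘D∘κ. -/
def conjOp (D : Oct ≃ₗ[ℝ] Oct) : Oct ≃ₗ[ℝ] Oct := kappa.trans (D.trans kappa)

/-- Triples of ℝ-linear bijections of 𝕆. -/
abbrev Triple := (Oct ≃ₗ[ℝ] Oct) × (Oct ≃ₗ[ℝ] Oct) × (Oct ≃ₗ[ℝ] Oct)

/-- The triality map τ(A,B,C) = (κBκ, κCκ, A). -/
def tauMap (T : Triple) : Triple := (conjOp T.2.1, conjOp T.2.2, T.1)

/-- The outer involution σ(A,B,C) = (B, A, κCκ). -/
def sigmaMap (T : Triple) : Triple := (T.2.1, T.1, conjOp T.2.2)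

/-- The induced map on S⁷ × S⁷: t(x,y) = (ȳ, x·ȳ). -/
def tS (p : Oct × Oct) : Oct × Oct := (conj p.2, mul p.1 (conj p.2))

/-- The swap s(x,y) = (y,x). -/
def swap (p : Oct × Oct) : Oct × Oct := (p.2, p.1)

end Oct

open Oct

/-!
In a nonassociative ring without zero divisors, `(x - 1) * (x * x + x + 1) = x * (x * x) - 1`
shows that a nontrivial cube root of unity `x` satisfies `x * x + x + 1 = 0`. If `s` and `t`
commute and both satisfy this equation, then `(t - s) * (t + s + 1) = 0`, so `t` is `s` or
`-(s + 1) = s * s`. In the octonions, the identity `x̄ * (x * y) = ‖x‖² y` excludes zero divisors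
and, for `x = s` and `y = s * s`, shows that `s * s = s̄`.
-/

section NonAssocRing

variable {R : Type*} [NonAssocRing R] [NoZeroDivisors R] {s t x : R}

lemma mul_self_add_self_add_one_eq_zero_of_cube_eq_one (hx : x * (x * x) = 1) (hx1 : x ≠ 1) :
    x * x + x + 1 = 0 := by
  have factored : (x - 1) * (x * x + x + 1) = 0 := by
    simp only [sub_mul, mul_add, mul_one, one_mul, hx]
    abel
  exact (mul_eq_zero.mp factored).resolve_left (sub_ne_zero.mpr hx1)

lemma eq_or_add_add_one_eq_zero_of_commute (hst : Commute s t) (h : t * t + t = s * s + s) :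
    t = s ∨ t + s + 1 = 0 := by
  have factored : (t - s) * (t + s + 1) = 0 :=
    calc (t - s) * (t + s + 1) = (t * t + t) - (s * s + s) + (t * s - s * t) := by
          simp only [sub_mul, mul_add, mul_one]
          abel
      _ = 0 := by rw [h, hst.eq, sub_self, sub_self, add_zero]
  exact (mul_eq_zero.mp factored).imp_left sub_eq_zero.mp

theorem commuting_cube_roots_general (hs3 : s * (s * s) = 1) (ht3 : t * (t * t) = 1)
    (hs1 : s ≠ 1) (hcomm : Commute s t) : t = 1 ∨ t = s ∨ t = s * s := by
  refine or_iff_not_imp_left.mpr fun ht1 => ?_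
  have hs := mul_self_add_self_add_one_eq_zero_of_cube_eq_one hs3 hs1
  have ht := mul_self_add_self_add_one_eq_zero_of_cube_eq_one ht3 ht1
  refine (eq_or_add_add_one_eq_zero_of_commute hcomm
    (add_right_cancel (ht.trans hs.symm))).imp_right fun hsum => ?_
  rw [add_assoc] at hs hsum
  exact add_right_cancel (hsum.trans hs.symm)

end NonAssocRing

namespace Oct

lemma normSq_eq_add_normSq (x : Oct) :
    normSq x = Quaternion.normSq x.1 + Quaternion.normSq x.2 := by
  simp only [normSq, Quaternion.normSq_eq_norm_mul_self, sq]

lemma conj_mul_mul (x y : Oct) : mul (conj x) (mul x y) = normSq x • y := by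
  obtain ⟨a, b⟩ := x
  obtain ⟨c, d⟩ := y
  rw [normSq_eq_add_normSq]
  ext1
  · calc star a * (a * c - star d * b) - star (d * a + b * star c) * -b
        = star a * a * c + c * (star b * b) := by
          simp only [star_add, star_mul, star_star]
          noncomm_ring
      _ = (Quaternion.normSq a + Quaternion.normSq b) • c := by
          rw [Quaternion.star_mul_self, Quaternion.star_mul_self, Quaternion.coe_mul_eq_smul,
            Quaternion.mul_coe_eq_smul, add_smul]
  · calc (d * a + b * star c) * star a + -b * star (a * c - star d * b)
        = d * (a * star a) + b * star b * d := by
          simp only [star_sub, star_mul, star_star]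
          noncomm_ring
      _ = (Quaternion.normSq a + Quaternion.normSq b) • d := by
          rw [Quaternion.self_mul_star, Quaternion.self_mul_star, Quaternion.mul_coe_eq_smul,
            Quaternion.coe_mul_eq_smul, add_smul]

lemma normSq_eq_zero {x : Oct} : normSq x = 0 ↔ x = 0 := by
  rw [normSq, add_eq_zero_iff_of_nonneg (sq_nonneg _) (sq_nonneg _), Prod.ext_iff]
  simp

lemma eq_zero_or_eq_zero_of_mul_eq_zero {x y : Oct} (h : mul x y = 0) : x = 0 ∨ y = 0 := by
  have hxy : normSq x • y = 0 := by
    rw [← conj_mul_mul, h]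
    simp [mul]
  exact (smul_eq_zero.mp hxy).imp_left normSq_eq_zero.mp

lemma conj_eq_mul_self_of_cube_eq_one {s : Oct} (hs : normSq s = 1) (hs3 : mul s (mul s s) = one) :
    conj s = mul s s :=
  calc conj s = mul (conj s) one := by simp [mul, one]
    _ = mul (conj s) (mul s (mul s s)) := by rw [hs3]
    _ = mul s s := by rw [conj_mul_mul, hs, one_smul]

end Oct

/-- The octonions as a nonassociative ring. This is a type synonym because `Oct` reduces to
`ℍ × ℍ`, which already carries the componentwise product. -/
def Octonion : Type := Oct

namespace Octonion

instance : AddCommGroup Octonion := inferInstanceAs (AddCommGroup Oct)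

instance : NonAssocRing Octonion where
  mul := Oct.mul
  one := Oct.one
  left_distrib (x y z : Oct) := show mul x (y + z) = mul x y + mul x z by
    ext1 <;> simp only [mul, Prod.fst_add, Prod.snd_add, star_add, mul_add, add_mul] <;> abel
  right_distrib (x y z : Oct) := show mul (x + y) z = mul x z + mul y z by
    ext1 <;> simp only [mul, Prod.fst_add, Prod.snd_add, mul_add, add_mul] <;> abel
  zero_mul (x : Oct) := show mul 0 x = 0 by simp [mul]
  mul_zero (x : Oct) := show mul x 0 = 0 by simp [mul]
  one_mul (x : Oct) := show mul one x = x by simp [mul, one]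
  mul_one (x : Oct) := show mul x one = x by simp [mul, one]

instance : NoZeroDivisors Octonion where
  eq_zero_or_eq_zero_of_mul_eq_zero := Oct.eq_zero_or_eq_zero_of_mul_eq_zero

end Octonion

/-- a unit cube root of unity t commuting with a nontrivial unit cube
root of unity s lies in {1, s, s̄}. -/
theorem commuting_cube_roots (s t : Oct) (hs : normSq s = 1) (ht : normSq t = 1)
    (hs3 : mul s (mul s s) = one) (ht3 : mul t (mul t t) = one)
    (hs1 : s ≠ one) (hcomm : mul s t = mul t s) :
    t = one ∨ t = s ∨ t = conj s := by
  rw [conj_eq_mul_self_of_cube_eq_one hs hs3]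
  exact commuting_cube_roots_general (R := Octonion) hs3 ht3 hs1 hcomm
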